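/- arXiv:1507.00081 — 2 statements merged into one kernel-verified Lean document; each statement's English description precedes it below -/
import Mathlib

section
/- Let H₁ and H₂ be Cartan subalgebras of sl(n, ℂ) that are orthogonal with respect to the trace form, and let p₁,...,p_n and q₁,...,q_n be the associated complete systems of rank 1 orthogonal projectors (i.e., the minimal projectors in the span of H_i and the identity). Then Tr(p_i q_j) = 1/n for all i, j. Conversely, given two complete systems of rank 1 orthogonal projectors with Tr(p_i q_j) = 1/n for all i, j, their traceless parts p_i − (1/n)·id and q_j − (1/n)·id span orthogonal Cartan subalgebras. -/
open LieAlgebra.SpecialLinear Matrix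

/-- A complete system of minimal orthogonal projectors in `gl(n, ℂ)`:
rank 1 idempotents, pairwise orthogonal, summing to the identity. -/
def IsCompleteSystem {n : ℕ} (p : Fin n → Matrix (Fin n) (Fin n) ℂ) : Prop :=
  (∀ i, p i * p i = p i) ∧ (∀ i, (p i).rank = 1) ∧
    (∀ i j, i ≠ j → p i * p j = 0) ∧ (∑ i, p i = 1)

/-- Two subalgebras (or subsets) of `sl(n, ℂ)` are orthogonal with respect to the
Killing/trace form. -/
def OrthogonalSubalgebras {n : ℕ} (H₁ H₂ : LieSubalgebra ℂ ↥(sl (Fin n) ℂ)) : Prop :=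
  ∀ x ∈ H₁, ∀ y ∈ H₂,
    (((x : ↥(sl (Fin n) ℂ)) : Matrix (Fin n) (Fin n) ℂ) *
      ((y : ↥(sl (Fin n) ℂ)) : Matrix (Fin n) (Fin n) ℂ)).trace = 0

/-!
The trace form of the traceless parts of two matrices `a` and `b` is `Tr (ab) - Tr a Tr b / n`. For
matrices of trace one it vanishes exactly when `Tr (ab) = 1 / n`, so two complete systems of rank
one idempotents are unbiased exactly when the spans of their traceless parts are orthogonal.

The span of the traceless parts of such a system `p` consists of the traceless matrices in the
centralizer of `p`: if `x` commutes with every `p i`, then `x = ∑ i, p i * x * p i`, and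
`p i * x * p i` is a multiple of `p i` as `p i` has rank one. Hence it is an abelian subalgebra. It
is self-normalizing because `ad e ^ 3 = ad e` for an idempotent `e`, so that `ad e ^ 2` and `ad e`
have the same kernel.
-/

attribute [local instance] LieRing.ofAssociativeRing

section Idempotents

variable {A : Type*} [Ring A]

lemma lie_lie_lie_eq_lie_of_isIdempotentElem {e : A} (he : IsIdempotentElem e) (x : A) :
    ⁅e, ⁅e, ⁅e, x⁆⁆⁆ = ⁅e, x⁆ := by
  have he_left (y : A) : e * (e * y) = e * y := by rw [← mul_assoc, he.eq]
  simp only [Ring.lie_def, mul_sub, sub_mul, mul_assoc, he.eq, he_left]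
  abel

lemma commute_of_commute_lie_of_isIdempotentElem {e x : A} (he : IsIdempotentElem e)
    (h : Commute e ⁅e, x⁆) : Commute e x := by
  rw [commute_iff_lie_eq] at h ⊢
  rw [← lie_lie_lie_eq_lie_of_isIdempotentElem he, h, lie_zero]

end Idempotents

section OrthogonalIdempotents

variable {A : Type*} [Semiring A] {ι : Type*}

lemma commute_of_orthogonalIdempotents {p : ι → A} (hp : OrthogonalIdempotents p)
    (i j : ι) : Commute (p i) (p j) := by
  obtain rfl | hij := eq_or_ne i j
  · exact Commute.refl _
  · rw [commute_iff_eq, hp.ortho hij, hp.ortho hij.symm]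

lemma eq_sum_mul_mul_of_forall_commute [Fintype ι] {p : ι → A}
    (hp : CompleteOrthogonalIdempotents p) {x : A} (hx : ∀ i, Commute (p i) x) :
    x = ∑ i, p i * x * p i :=
  calc
    x = ∑ i, x * p i := by rw [← Finset.mul_sum, hp.complete, mul_one]
    _ = ∑ i, p i * x * p i :=
      Finset.sum_congr rfl fun i _ => by rw [(hx i).eq, mul_assoc, (hp.idem i).eq]

end OrthogonalIdempotents

section RankOne

variable {K : Type*} [Field K] {n : Type*} [Fintype n]

lemma exists_eq_vecMulVec_of_rank_eq_one {m : Type*} {a : Matrix m n K} (ha : a.rank = 1) :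
    ∃ (u : m → K) (v : n → K), a = vecMulVec u v := by
  classical
  obtain ⟨⟨u, _⟩, -, hu⟩ := finrank_eq_one_iff'.mp ha
  have col_eq (j : n) : ∃ c : K, c • u = a.col j := by
    obtain ⟨c, hc⟩ := hu ⟨a.mulVecLin (Pi.single j 1), LinearMap.mem_range_self _ _⟩
    exact ⟨c, by simpa using congrArg Subtype.val hc⟩
  choose v hv using col_eq
  refine ⟨u, v, Matrix.ext fun i j => ?_⟩
  calc
    a i j = v j * u i := (congrFun (hv j) i).symm
    _ = vecMulVec u v i j := mul_comm _ _

lemma mul_mul_self_mem_span_singleton_of_rank_eq_one {e : Matrix n n K} (he : e.rank = 1)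
    (x : Matrix n n K) : e * x * e ∈ Submodule.span K {e} := by
  obtain ⟨u, v, rfl⟩ := exists_eq_vecMulVec_of_rank_eq_one he
  refine Submodule.mem_span_singleton.mpr ⟨(v ᵥ* x) ⬝ᵥ u, ?_⟩
  rw [vecMulVec_mul, vecMulVec_mul_vecMulVec, vecMulVec_smul]

lemma trace_eq_rank_of_isIdempotentElem {e : Matrix n n K} (he : IsIdempotentElem e) :
    e.trace = (e.rank : K) := by
  classical
  have hproj : LinearMap.IsProj (LinearMap.range e.toLin') e.toLin' :=
    LinearMap.IsIdempotentElem.isProj_range _ (he.map Matrix.toLinAlgEquiv')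
  rw [← Matrix.trace_toLin'_eq, hproj.trace]
  rfl

lemma trace_eq_one_of_rank_eq_one {e : Matrix n n K} (he : IsIdempotentElem e)
    (hrank : e.rank = 1) : e.trace = 1 := by
  rw [trace_eq_rank_of_isIdempotentElem he, hrank, Nat.cast_one]

lemma centralizer_range_eq_span [DecidableEq n] {ι : Type*} [Fintype ι] {p : ι → Matrix n n K}
    (hp : CompleteOrthogonalIdempotents p) (hrank : ∀ i, (p i).rank = 1) :
    Subalgebra.toSubmodule (Subalgebra.centralizer K (Set.range p)) =
      Submodule.span K (Set.range p) := by
  apply le_antisymm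
  · intro x hx
    have hcomm (i : ι) : Commute (p i) x := hx (p i) ⟨i, rfl⟩
    rw [eq_sum_mul_mul_of_forall_commute hp hcomm]
    refine Submodule.sum_mem _ fun i _ => Submodule.span_mono ?_
      (mul_mul_self_mem_span_singleton_of_rank_eq_one (hrank i) x)
    exact Set.singleton_subset_iff.mpr ⟨i, rfl⟩
  · rw [Submodule.span_le]
    rintro _ ⟨i, rfl⟩ _ ⟨j, rfl⟩
    exact commute_of_orthogonalIdempotents hp.toOrthogonalIdempotents j i

end RankOne

section TraceForm

variable {R : Type*} [CommRing R] {n : Type*} [Fintype n]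

lemma mem_sl_iff [DecidableEq n] {a : Matrix n n R} : a ∈ sl n R ↔ a.trace = 0 := Iff.rfl

lemma trace_mul_eq_zero_of_mem_span {s t : Set (Matrix n n R)}
    (hst : ∀ a ∈ s, ∀ b ∈ t, (a * b).trace = 0) {x y : Matrix n n R}
    (hx : x ∈ Submodule.span R s) (hy : y ∈ Submodule.span R t) : (x * y).trace = 0 := by
  induction hx, hy using Submodule.span_induction₂ with
  | mem_mem a b ha hb => exact hst a ha b hb
  | zero_left | zero_right => simp
  | add_left | add_right | smul_left | smul_right => simp_all [add_mul, mul_add]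

end TraceForm

section TracelessPart

variable {K : Type*} [Field K] {n : Type*} [Fintype n] [DecidableEq n]

/-- The projection of `gl n` onto `sl n` along the scalar matrices. Where the characteristic of `K`
divides the size of the matrices there is no such projection, and this is the identity. -/
def tracelessPart : Matrix n n K →ₗ[K] Matrix n n K :=
  LinearMap.id - (traceLinearMap n K K).smulRight ((Fintype.card n : K)⁻¹ • 1)

lemma tracelessPart_apply (a : Matrix n n K) :
    tracelessPart a = a - a.trace • (Fintype.card n : K)⁻¹ • (1 : Matrix n n K) := rfl

lemma tracelessPart_of_trace_eq_one {a : Matrix n n K} (ha : a.trace = 1) :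
    tracelessPart a = a - (Fintype.card n : K)⁻¹ • (1 : Matrix n n K) := by
  rw [tracelessPart_apply, ha, one_smul]

lemma tracelessPart_of_mem_sl {a : Matrix n n K} (ha : a ∈ sl n K) : tracelessPart a = a := by
  rw [tracelessPart_apply, mem_sl_iff.mp ha, zero_smul, sub_zero]

lemma lie_tracelessPart (a b : Matrix n n K) : ⁅a, tracelessPart b⁆ = ⁅a, b⁆ := by
  simp [tracelessPart_apply, Ring.lie_def, mul_sub, sub_mul]

lemma trace_eq_one_of_sub_mem_sl (hn : (Fintype.card n : K) ≠ 0) {a : Matrix n n K}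
    (ha : a - (Fintype.card n : K)⁻¹ • (1 : Matrix n n K) ∈ sl n K) : a.trace = 1 := by
  simpa [mem_sl_iff, hn, sub_eq_zero] using ha

lemma tracelessPart_mem_sl (hn : (Fintype.card n : K) ≠ 0) (a : Matrix n n K) :
    tracelessPart a ∈ sl n K := by
  simp [mem_sl_iff, tracelessPart_apply, hn]

lemma trace_tracelessPart_mul_tracelessPart (hn : (Fintype.card n : K) ≠ 0) (a b : Matrix n n K) :
    (tracelessPart a * tracelessPart b).trace =
      (a * b).trace - a.trace * b.trace * (Fintype.card n : K)⁻¹ := by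
  simp only [tracelessPart_apply, sub_mul, mul_sub, smul_mul_assoc, mul_smul_comm, one_mul, mul_one,
    trace_sub, trace_smul, trace_one, smul_eq_mul]
  field_simp
  ring

lemma trace_tracelessPart_mul_tracelessPart_eq_zero_iff (hn : (Fintype.card n : K) ≠ 0)
    {a b : Matrix n n K} (ha : a.trace = 1) (hb : b.trace = 1) :
    (tracelessPart a * tracelessPart b).trace = 0 ↔ (a * b).trace = (Fintype.card n : K)⁻¹ := by
  rw [trace_tracelessPart_mul_tracelessPart hn, ha, hb, one_mul, one_mul, sub_eq_zero]

end TracelessPart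

section SlCentralizer

variable {K : Type*} [Field K] {n : Type*} [Fintype n] [DecidableEq n] {s : Set (Matrix n n K)}

/-- The Lie subalgebra of traceless matrices commuting with every matrix in `s`. For a complete
system of rank one idempotents it is the associated Cartan subalgebra of `sl n`. -/
def slCentralizer (s : Set (Matrix n n K)) : LieSubalgebra K (sl n K) :=
  (lieSubalgebraOfSubalgebra K (Matrix n n K) (Subalgebra.centralizer K s)).comap (sl n K).incl

lemma mem_slCentralizer {x : sl n K} :
    x ∈ slCentralizer s ↔ ∀ a ∈ s, Commute a (x : Matrix n n K) :=
  Iff.rfl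

lemma isLieAbelian_slCentralizer
    (hs : Subalgebra.toSubmodule (Subalgebra.centralizer K s) = Submodule.span K s) :
    IsLieAbelian (slCentralizer s) := by
  refine ⟨fun x y => Subtype.ext (Subtype.ext ?_)⟩
  have hx : (x : Matrix n n K) ∈ Submodule.span K s := hs.le x.2
  have hspan : Submodule.span K s ≤
      Subalgebra.toSubmodule (Subalgebra.centralizer K {(y : Matrix n n K)}) := by
    rw [Submodule.span_le]
    rintro a ha _ rfl
    exact (mem_slCentralizer.mp y.2 a ha).symm
  exact commute_iff_lie_eq.mp (hspan hx _ rfl).symm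

lemma normalizer_slCentralizer (hn : (Fintype.card n : K) ≠ 0)
    (hidem : ∀ e ∈ s, IsIdempotentElem e) (hcomm : ∀ a ∈ s, ∀ b ∈ s, Commute a b) :
    (slCentralizer s).normalizer = slCentralizer s := by
  refine le_antisymm (fun x hx e he => ?_) (LieSubalgebra.le_normalizer _)
  let e₀ : sl n K := ⟨tracelessPart e, tracelessPart_mem_sl hn e⟩
  have he₀ : e₀ ∈ slCentralizer s := mem_slCentralizer.mpr fun a ha => by
    rw [commute_iff_lie_eq, lie_tracelessPart, commute_iff_lie_eq.mp (hcomm a ha e he)]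
  have hlie : Commute e ⁅(x : Matrix n n K), e⁆ := by
    rw [← lie_tracelessPart]
    exact (LieSubalgebra.mem_normalizer_iff _ _).mp hx e₀ he₀ e he
  rw [← lie_skew] at hlie
  exact commute_of_commute_lie_of_isIdempotentElem (hidem e he) (by simpa using hlie.neg_right)

lemma isCartanSubalgebra_slCentralizer (hn : (Fintype.card n : K) ≠ 0)
    (hidem : ∀ e ∈ s, IsIdempotentElem e)
    (hs : Subalgebra.toSubmodule (Subalgebra.centralizer K s) = Submodule.span K s) :
    (slCentralizer s).IsCartanSubalgebra := by
  have hcomm : ∀ a ∈ s, ∀ b ∈ s, Commute a b := fun a ha _ hb =>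
    hs.ge (Submodule.subset_span hb) a ha
  have := isLieAbelian_slCentralizer hs
  exact ⟨inferInstance, normalizer_slCentralizer hn hidem hcomm⟩

lemma coe_image_slCentralizer (hn : (Fintype.card n : K) ≠ 0)
    (hs : Subalgebra.toSubmodule (Subalgebra.centralizer K s) = Submodule.span K s) :
    (fun x : sl n K => (x : Matrix n n K)) '' (slCentralizer s : Set (sl n K)) =
      Submodule.span K (tracelessPart '' s) := by
  rw [← Submodule.map_span, ← hs]
  apply Set.Subset.antisymm
  · rintro _ ⟨x, hx, rfl⟩
    exact ⟨x, hx, tracelessPart_of_mem_sl x.2⟩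
  · rintro _ ⟨x, hx, rfl⟩
    refine ⟨⟨tracelessPart x, tracelessPart_mem_sl hn x⟩, fun a ha => ?_, rfl⟩
    exact commute_iff_lie_eq.mpr ((lie_tracelessPart a x).trans (commute_iff_lie_eq.mp (hx a ha)))

end SlCentralizer

section UnbiasedSystems

variable {K : Type*} [Field K] {n : Type*} [Fintype n] [DecidableEq n]
  {ι κ : Type*} [Fintype ι] [Fintype κ] {p : ι → Matrix n n K} {q : κ → Matrix n n K}

lemma trace_mul_eq_inv_card_of_orthogonal (hn : (Fintype.card n : K) ≠ 0)
    {a b : Matrix n n K} {x y : sl n K}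
    (hx : (x : Matrix n n K) = a - (Fintype.card n : K)⁻¹ • (1 : Matrix n n K))
    (hy : (y : Matrix n n K) = b - (Fintype.card n : K)⁻¹ • (1 : Matrix n n K))
    (hxy : ((x : Matrix n n K) * (y : Matrix n n K)).trace = 0) :
    (a * b).trace = (Fintype.card n : K)⁻¹ := by
  have ha : a.trace = 1 := trace_eq_one_of_sub_mem_sl hn (hx ▸ x.2)
  have hb : b.trace = 1 := trace_eq_one_of_sub_mem_sl hn (hy ▸ y.2)
  rw [hx, hy, ← tracelessPart_of_trace_eq_one ha, ← tracelessPart_of_trace_eq_one hb] at hxy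
  exact (trace_tracelessPart_mul_tracelessPart_eq_zero_iff hn ha hb).mp hxy

lemma isCartanSubalgebra_slCentralizer_range (hn : (Fintype.card n : K) ≠ 0)
    (hp : CompleteOrthogonalIdempotents p) (hrank : ∀ i, (p i).rank = 1) :
    (slCentralizer (Set.range p)).IsCartanSubalgebra :=
  isCartanSubalgebra_slCentralizer hn (Set.forall_mem_range.mpr hp.idem)
    (centralizer_range_eq_span hp hrank)

lemma coe_image_slCentralizer_range (hn : (Fintype.card n : K) ≠ 0)
    (hp : CompleteOrthogonalIdempotents p) (hrank : ∀ i, (p i).rank = 1) :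
    (fun x : sl n K => (x : Matrix n n K)) '' (slCentralizer (Set.range p) : Set (sl n K)) =
      Submodule.span K
        (Set.range fun i => p i - (Fintype.card n : K)⁻¹ • (1 : Matrix n n K)) := by
  rw [coe_image_slCentralizer hn (centralizer_range_eq_span hp hrank), ← Set.range_comp]
  have htrace (i : ι) : (p i).trace = 1 := trace_eq_one_of_rank_eq_one (hp.idem i) (hrank i)
  simp only [Function.comp_def, tracelessPart_of_trace_eq_one (htrace _)]

lemma trace_mul_eq_zero_of_mem_slCentralizer_range (hn : (Fintype.card n : K) ≠ 0)
    (hp : CompleteOrthogonalIdempotents p) (hp_rank : ∀ i, (p i).rank = 1)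
    (hq : CompleteOrthogonalIdempotents q) (hq_rank : ∀ j, (q j).rank = 1)
    (hpq : ∀ i j, (p i * q j).trace = (Fintype.card n : K)⁻¹) {x y : sl n K}
    (hx : x ∈ slCentralizer (Set.range p)) (hy : y ∈ slCentralizer (Set.range q)) :
    ((x : Matrix n n K) * (y : Matrix n n K)).trace = 0 := by
  have hx_span : (x : Matrix n n K) ∈ Submodule.span K (tracelessPart '' Set.range p) :=
    (coe_image_slCentralizer hn (centralizer_range_eq_span hp hp_rank)).subset ⟨x, hx, rfl⟩
  have hy_span : (y : Matrix n n K) ∈ Submodule.span K (tracelessPart '' Set.range q) :=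
    (coe_image_slCentralizer hn (centralizer_range_eq_span hq hq_rank)).subset ⟨y, hy, rfl⟩
  refine trace_mul_eq_zero_of_mem_span ?_ hx_span hy_span
  rintro _ ⟨_, ⟨i, rfl⟩, rfl⟩ _ ⟨_, ⟨j, rfl⟩, rfl⟩
  have hp_trace : (p i).trace = 1 := trace_eq_one_of_rank_eq_one (hp.idem i) (hp_rank i)
  have hq_trace : (q j).trace = 1 := trace_eq_one_of_rank_eq_one (hq.idem j) (hq_rank j)
  exact (trace_tracelessPart_mul_tracelessPart_eq_zero_iff hn hp_trace hq_trace).mpr (hpq i j)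

end UnbiasedSystems

theorem orthogonal_cartan_iff_unbiased_general {K : Type*} [Field K] {n : Type*} [Fintype n]
    [DecidableEq n] {ι κ : Type*} [Fintype ι] [Fintype κ] (hn : (Fintype.card n : K) ≠ 0)
    (p : ι → Matrix n n K) (q : κ → Matrix n n K) :
    (∀ H₁ H₂ : LieSubalgebra K (sl n K),
      (∀ x ∈ H₁, ∀ y ∈ H₂, ((x : Matrix n n K) * (y : Matrix n n K)).trace = 0) →
      (∀ i, ∃ h ∈ H₁,
        (h : Matrix n n K) = p i - (Fintype.card n : K)⁻¹ • (1 : Matrix n n K)) →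
      (∀ j, ∃ h ∈ H₂,
        (h : Matrix n n K) = q j - (Fintype.card n : K)⁻¹ • (1 : Matrix n n K)) →
      ∀ i j, (p i * q j).trace = (Fintype.card n : K)⁻¹) ∧
    (CompleteOrthogonalIdempotents p → (∀ i, (p i).rank = 1) →
      CompleteOrthogonalIdempotents q → (∀ j, (q j).rank = 1) →
      (∀ i j, (p i * q j).trace = (Fintype.card n : K)⁻¹) →
      ∃ H₁ H₂ : LieSubalgebra K (sl n K),
        H₁.IsCartanSubalgebra ∧ H₂.IsCartanSubalgebra ∧
        (∀ x ∈ H₁, ∀ y ∈ H₂, ((x : Matrix n n K) * (y : Matrix n n K)).trace = 0) ∧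
        (fun x : sl n K => (x : Matrix n n K)) '' (H₁ : Set (sl n K)) =
          Submodule.span K
            (Set.range fun i => p i - (Fintype.card n : K)⁻¹ • (1 : Matrix n n K)) ∧
        (fun x : sl n K => (x : Matrix n n K)) '' (H₂ : Set (sl n K)) =
          Submodule.span K
            (Set.range fun j => q j - (Fintype.card n : K)⁻¹ • (1 : Matrix n n K))) := by
  constructor
  · intro H₁ H₂ horth hp hq i j
    obtain ⟨x, hx, hx_eq⟩ := hp i
    obtain ⟨y, hy, hy_eq⟩ := hq j
    exact trace_mul_eq_inv_card_of_orthogonal hn hx_eq hy_eq (horth x hx y hy)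
  · intro hp hp_rank hq hq_rank hpq
    exact ⟨slCentralizer (Set.range p), slCentralizer (Set.range q),
      isCartanSubalgebra_slCentralizer_range hn hp hp_rank,
      isCartanSubalgebra_slCentralizer_range hn hq hq_rank,
      fun _ hx _ hy =>
        trace_mul_eq_zero_of_mem_slCentralizer_range hn hp hp_rank hq hq_rank hpq hx hy,
      coe_image_slCentralizer_range hn hp hp_rank, coe_image_slCentralizer_range hn hq hq_rank⟩

lemma IsCompleteSystem.completeOrthogonalIdempotents {n : ℕ} {p : Fin n → Matrix (Fin n) (Fin n) ℂ}
    (hp : IsCompleteSystem p) : CompleteOrthogonalIdempotents p where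
  idem := hp.1
  ortho := hp.2.2.1
  complete := hp.2.2.2

theorem orthogonal_cartan_iff_unbiased (n : ℕ) (hn : 0 < n) :
    -- orthogonal Cartan subalgebras yield algebraically unbiased systems
    (∀ (H₁ H₂ : LieSubalgebra ℂ ↥(sl (Fin n) ℂ)),
      H₁.IsCartanSubalgebra → H₂.IsCartanSubalgebra →
      OrthogonalSubalgebras H₁ H₂ →
      ∀ (p q : Fin n → Matrix (Fin n) (Fin n) ℂ),
        IsCompleteSystem p → IsCompleteSystem q →
        (∀ i, ∃ h ∈ H₁, ((h : ↥(sl (Fin n) ℂ)) : Matrix (Fin n) (Fin n) ℂ)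
            = p i - (n : ℂ)⁻¹ • (1 : Matrix (Fin n) (Fin n) ℂ)) →
        (∀ j, ∃ h ∈ H₂, ((h : ↥(sl (Fin n) ℂ)) : Matrix (Fin n) (Fin n) ℂ)
            = q j - (n : ℂ)⁻¹ • (1 : Matrix (Fin n) (Fin n) ℂ)) →
        ∀ i j, (p i * q j).trace = (n : ℂ)⁻¹) ∧
    -- conversely, unbiased systems span orthogonal Cartan subalgebras
    (∀ (p q : Fin n → Matrix (Fin n) (Fin n) ℂ),
      IsCompleteSystem p → IsCompleteSystem q →
      (∀ i j, (p i * q j).trace = (n : ℂ)⁻¹) →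
      ∃ (H₁ H₂ : LieSubalgebra ℂ ↥(sl (Fin n) ℂ)),
        H₁.IsCartanSubalgebra ∧ H₂.IsCartanSubalgebra ∧
        OrthogonalSubalgebras H₁ H₂ ∧
        (fun (x : ↥(sl (Fin n) ℂ)) => (x : Matrix (Fin n) (Fin n) ℂ)) '' (H₁ : Set _)
          = ↑(Submodule.span ℂ
              (Set.range fun i => p i - (n : ℂ)⁻¹ • (1 : Matrix (Fin n) (Fin n) ℂ))) ∧
        (fun (x : ↥(sl (Fin n) ℂ)) => (x : Matrix (Fin n) (Fin n) ℂ)) '' (H₂ : Set _)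
          = ↑(Submodule.span ℂ
              (Set.range fun j => q j - (n : ℂ)⁻¹ • (1 : Matrix (Fin n) (Fin n) ℂ)))) := by
  have general := orthogonal_cartan_iff_unbiased_general (K := ℂ) (n := Fin n) (ι := Fin n)
    (κ := Fin n) (by simpa using hn.ne')
  simp only [Fintype.card_fin] at general
  exact ⟨fun H₁ H₂ _ _ horth p q _ _ => (general p q).1 H₁ H₂ horth,
    fun p q hp hq => (general p q).2 hp.completeOrthogonalIdempotents hp.2.1
      hq.completeOrthogonalIdempotents hq.2.1⟩
end

section
/- The only matrices in the Birkhoff polytope B_n whose entries all lie in (1/n)·ℤ and that belong to the lattice generated by integer matrices together with the matrix Λ₀ (all of whose entries are 1/n) are the permutation matrices and Λ₀ itself. -/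
open Matrix

/-!
In the lattice generated by the integer matrices and `Λ₀`, all entries of a matrix are congruent
to one another modulo `1`. If they also lie in `[0, 1]` and one of them lies strictly inside, then
every other entry is at distance less than `1` from it, hence equal to it. So a doubly stochastic
matrix in the lattice either has all entries in `{0, 1}`, and is a permutation matrix, or is
constant, and then its row sums force the value `1 / n`.
-/

theorem eq_of_modEq_of_abs_sub_lt {G : Type*} [AddCommGroup G] [LinearOrder G]
    [IsOrderedAddMonoid G] {p a b : G} (hmod : a ≡ b [PMOD p]) (hlt : |b - a| < p) : a = b := by
  obtain ⟨z, hz⟩ := AddCommGroup.modEq_iff_zsmul'.1 hmod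
  have hp : 0 < p := (abs_nonneg _).trans_lt hlt
  have hz_lt : |z| • p < (1 : ℤ) • p := by
    rwa [one_zsmul, ← abs_of_pos hp, ← abs_zsmul, abs_of_pos hp, ← hz]
  have hz_zero : z = 0 := Int.abs_lt_one_iff.1 ((zsmul_lt_zsmul_iff_left hp).1 hz_lt)
  rw [hz_zero, zero_zsmul, sub_eq_zero] at hz
  exact hz.symm

/-- The additive group of matrices whose entries are all congruent to one another modulo `1`,
i.e. the sums of an integer matrix and a constant matrix. It contains the lattice generated by the
integer matrices and any single constant matrix. -/
def congruentEntries (m n R : Type*) [Ring R] : AddSubgroup (Matrix m n R) where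
  carrier := {A | ∀ i j k l, A i j ≡ A k l [PMOD 1]}
  zero_mem' _ _ _ _ := AddCommGroup.modEq_rfl
  add_mem' hA hB i j k l := (hA i j k l).add (hB i j k l)
  neg_mem' hA i j k l := (hA i j k l).neg

section CongruentEntries

variable {m n R : Type*} [Ring R]

theorem mem_congruentEntries_of_forall_eq_intCast {A : Matrix m n R}
    (hA : ∀ i j, ∃ z : ℤ, A i j = z) : A ∈ congruentEntries m n R := by
  intro i j k l
  obtain ⟨a, ha⟩ := hA i j
  obtain ⟨b, hb⟩ := hA k l
  exact AddCommGroup.modEq_iff_zsmul'.2 ⟨b - a, by simp [ha, hb]⟩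

theorem mem_congruentEntries_of_forall_eq {A : Matrix m n R} {c : R} (hA : ∀ i j, A i j = c) :
    A ∈ congruentEntries m n R := fun i j k l ↦ by
  rw [hA i j, hA k l]

theorem closure_intMatrices_union_singleton_le_congruentEntries {Λ : Matrix m n R} {c : R}
    (hΛ : ∀ i j, Λ i j = c) :
    AddSubgroup.closure ({A : Matrix m n R | ∀ i j, ∃ z : ℤ, A i j = z} ∪ {Λ}) ≤
      congruentEntries m n R :=
  (AddSubgroup.closure_le _).2 <| Set.union_subset
    (fun _ ↦ mem_congruentEntries_of_forall_eq_intCast)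
    (Set.singleton_subset_iff.2 (mem_congruentEntries_of_forall_eq hΛ))

theorem zero_one_or_constant_of_mem_congruentEntries [LinearOrder R] [IsStrictOrderedRing R]
    {A : Matrix m n R} (hA : A ∈ congruentEntries m n R) (hcube : ∀ i j, A i j ∈ Set.Icc 0 1) :
    (∀ i j, A i j = 0 ∨ A i j = 1) ∨ ∃ c, ∀ i j, A i j = c := by
  refine or_iff_not_imp_left.2 fun hinterior ↦ ?_
  push Not at hinterior
  obtain ⟨a, b, hne_zero, hne_one⟩ := hinterior
  have hpos : 0 < A a b := (hcube a b).1.lt_of_ne' hne_zero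
  have hlt_one : A a b < 1 := (hcube a b).2.lt_of_ne hne_one
  refine ⟨A a b, fun i j ↦ eq_of_modEq_of_abs_sub_lt (hA i j a b) (abs_sub_lt_iff.2 ⟨?_, ?_⟩)⟩
  · exact (sub_le_self _ (hcube i j).1).trans_lt hlt_one
  · exact (sub_lt_self _ hpos).trans_le (hcube i j).2

end CongruentEntries

section ZeroOne

variable {ι R : Type*} [Fintype ι] [DecidableEq ι] [Semiring R] [PartialOrder R]
  [IsStrictOrderedRing R]

theorem exists_eq_single_of_zero_one_of_sum_eq_one {f : ι → R} (hf : ∀ i, f i = 0 ∨ f i = 1)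
    (hsum : ∑ i, f i = 1) : ∃ i, f = Pi.single i 1 := by
  have hnonneg (i : ι) : 0 ≤ f i := by
    rcases hf i with h | h <;> simp [h]
  obtain ⟨i, -, hi⟩ := Finset.exists_ne_zero_of_sum_ne_zero (hsum.trans_ne one_ne_zero)
  have hi_one : f i = 1 := (hf i).resolve_left hi
  have hrest : ∑ j ∈ Finset.univ.erase i, f j = 0 := by
    rwa [← Finset.add_sum_erase _ _ (Finset.mem_univ i), hi_one, add_eq_left] at hsum
  rw [Finset.sum_eq_zero_iff_of_nonneg fun j _ ↦ hnonneg j] at hrest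
  refine ⟨i, funext fun j ↦ ?_⟩
  obtain rfl | hji := eq_or_ne j i
  · rw [hi_one, Pi.single_eq_same]
  · rw [hrest j (Finset.mem_erase.2 ⟨hji, Finset.mem_univ j⟩), Pi.single_eq_of_ne hji]

theorem exists_eq_permMatrix_of_zero_one_of_mem_doublyStochastic {M : Matrix ι ι R}
    (hM : M ∈ doublyStochastic R ι) (hzero_one : ∀ i j, M i j = 0 ∨ M i j = 1) :
    ∃ σ : Equiv.Perm ι, M = σ.permMatrix R := by
  choose row hrow using fun i ↦ exists_eq_single_of_zero_one_of_sum_eq_one (hzero_one i)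
    (sum_row_of_mem_doublyStochastic hM i)
  choose col hcol using fun j ↦ exists_eq_single_of_zero_one_of_sum_eq_one (hzero_one · j)
    (sum_col_of_mem_doublyStochastic hM j)
  have row_eq_iff (i j : ι) : row i = j ↔ M i j = 1 := by
    simp [hrow i, Pi.single_apply, eq_comm]
  have col_eq_iff (i j : ι) : col j = i ↔ M i j = 1 := by
    simp [congrFun (hcol j) i, Pi.single_apply, eq_comm]
  let σ : Equiv.Perm ι :=
    { toFun := row
      invFun := col
      left_inv i := (col_eq_iff i (row i)).2 ((row_eq_iff i (row i)).1 rfl)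
      right_inv j := (row_eq_iff (col j) j).2 ((col_eq_iff (col j) j).1 rfl) }
  exact ⟨σ, funext fun i ↦ (hrow i).trans (PEquiv.toMatrix_toPEquiv_apply σ i).symm⟩

end ZeroOne

theorem eq_inv_card_of_forall_eq_of_mem_doublyStochastic {ι R : Type*} [Fintype ι] [DecidableEq ι]
    [DivisionRing R] [PartialOrder R] [IsOrderedRing R] {M : Matrix ι ι R} {c : R}
    (hM : M ∈ doublyStochastic R ι) (hc : ∀ i j, M i j = c) (i j : ι) :
    M i j = (Fintype.card ι : R)⁻¹ := by
  have hsum : Fintype.card ι * c = 1 := by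
    simpa [hc] using sum_row_of_mem_doublyStochastic hM i
  rw [hc, eq_inv_of_mul_eq_one_right hsum]

theorem lattice_points_of_birkhoff_general {ι R : Type*} [Fintype ι] [DecidableEq ι]
    [DivisionRing R] [LinearOrder R] [IsStrictOrderedRing R] {M : Matrix ι ι R}
    (hM : M ∈ doublyStochastic R ι) (hmod : M ∈ congruentEntries ι ι R) :
    (∃ σ : Equiv.Perm ι, M = σ.permMatrix R) ∨ M = of fun _ _ ↦ (Fintype.card ι : R)⁻¹ := by
  have hcube (i j : ι) : M i j ∈ Set.Icc 0 1 :=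
    ⟨nonneg_of_mem_doublyStochastic hM, le_one_of_mem_doublyStochastic hM⟩
  obtain hzero_one | ⟨c, hc⟩ := zero_one_or_constant_of_mem_congruentEntries hmod hcube
  · exact .inl (exists_eq_permMatrix_of_zero_one_of_mem_doublyStochastic hM hzero_one)
  · exact .inr (Matrix.ext (eq_inv_card_of_forall_eq_of_mem_doublyStochastic hM hc))

theorem lattice_points_of_birkhoff (n : ℕ) (hn : 0 < n)
    (Lam0 : Matrix (Fin n) (Fin n) ℝ) (hLam0 : ∀ i j, Lam0 i j = (n : ℝ)⁻¹)
    (N : AddSubgroup (Matrix (Fin n) (Fin n) ℝ))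
    (hN : N = AddSubgroup.closure
        ({M : Matrix (Fin n) (Fin n) ℝ | ∀ i j, ∃ z : ℤ, M i j = (z : ℝ)} ∪ {Lam0}))
    (M : Matrix (Fin n) (Fin n) ℝ)
    (hM : M ∈ doublyStochastic ℝ (Fin n))
    (hMent : ∀ i j, ∃ z : ℤ, M i j = (z : ℝ) / n)
    (hMN : M ∈ N) :
    (∃ σ : Equiv.Perm (Fin n), M = σ.permMatrix ℝ) ∨ M = Lam0 := by
  have hmod := closure_intMatrices_union_singleton_le_congruentEntries hLam0 (hN ▸ hMN)
  simpa [← Matrix.ext_iff, hLam0] using lattice_points_of_birkhoff_general hM hmod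
end
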